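/- Let γ > −1. For x = (x₁,x₂), y = (y₁,y₂) ∈ [−1,1]², set s := (2x₁x₂, x₁²+x₂²−1), t := (2y₁y₂, y₁²+y₂²−1), and d^{(i,j)} := a_{w^{(i,j)}}^γ / a_w^γ. Then for every n ≥ 0 the reproducing kernel of Π_n² in L²(𝒲_γ) on [−1,1]² satisfies K_n(𝒲_γ; x, y) = K_{⌊n/2⌋}(W_γ; s, t) + d^{(1,1)} (x₁²−x₂²)(y₁²−y₂²) K_{⌊n/2⌋−1}(W_γ^{(1,1)}; s, t) + d^{(0,1)} (x₁+x₂)(y₁+y₂) K_{⌊(n−1)/2⌋}(W_γ^{(0,1)}; s, t) + d^{(1,0)} (x₁−x₂)(y₁−y₂) K_{⌊(n−1)/2⌋}(W_γ^{(1,0)}; s, t), with the convention K_{m} := 0 when m < 0. -/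

import Mathlib

open MeasureTheory Real Set Filter
open scoped ENNReal

noncomputable section

/-- The parabolic-type domain `Ω`, the image of the triangle `-1 < x < y < 1`
under `(x, y) ↦ (x + y, x y)`. -/
def omegaDom : Set (ℝ × ℝ) :=
  {q | ∃ x y : ℝ, -1 < x ∧ x < y ∧ y < 1 ∧ q = (x + y, x * y)}

/-- The square `[-1,1]²`. -/
def sqDom : Set (ℝ × ℝ) := Icc (-1 : ℝ) 1 ×ˢ Icc (-1 : ℝ) 1

/-- The open triangle `-1 < x < y < 1`. -/
def triDom : Set (ℝ × ℝ) := {q | -1 < q.1 ∧ q.1 < q.2 ∧ q.2 < 1}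

/-- The smaller root `x(u,v)` of `t² - u t + v = 0`. -/
def xRoot (q : ℝ × ℝ) : ℝ := (q.1 - Real.sqrt (q.1 ^ 2 - 4 * q.2)) / 2

/-- The larger root `y(u,v)` of `t² - u t + v = 0`. -/
def yRoot (q : ℝ × ℝ) : ℝ := (q.1 + Real.sqrt (q.1 ^ 2 - 4 * q.2)) / 2

/-- Evaluation of a two-variable polynomial at a point of `ℝ²`. -/
def evalP (P : MvPolynomial (Fin 2) ℝ) (q : ℝ × ℝ) : ℝ :=
  MvPolynomial.eval ![q.1, q.2] P

/-- The space `V_n(W)` of orthogonal polynomials of degree `n` for the weight `W`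
on the domain `D`: polynomials of exact total degree `n` orthogonal to all
polynomials of lower degree. -/
def Vpoly (D : Set (ℝ × ℝ)) (W : ℝ × ℝ → ℝ) (n : ℕ) : Set (MvPolynomial (Fin 2) ℝ) :=
  {P | P.totalDegree = n ∧ ∀ Q : MvPolynomial (Fin 2) ℝ, Q.totalDegree < n →
    (∫ q in D, evalP P q * evalP Q q * W q) = 0}

/-- `Q 0, …, Q n` is an orthonormal basis of `V_n(W)` on `D`. -/
def isONBVn (D : Set (ℝ × ℝ)) (W : ℝ × ℝ → ℝ) (n : ℕ)
    (Q : ℕ → MvPolynomial (Fin 2) ℝ) : Prop :=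
  (∀ k, k ≤ n → Q k ∈ Vpoly D W n) ∧
  (∀ k, k ≤ n → ∀ j, j ≤ n →
    (∫ q in D, evalP (Q k) q * evalP (Q j) q * W q) = if k = j then 1 else 0) ∧
  (∀ R ∈ Vpoly D W n, R ∈ Submodule.span ℝ (Q '' Set.Iic n))

/-- `K` is the reproducing kernel of `Π_n²` in `L²(W)` on the domain `D`:
it is a polynomial function, for each fixed `x ∈ D` it is a polynomial of total
degree `≤ n` in the second variable, and it reproduces every polynomial of total
degree `≤ n`. -/
def IsRK (D : Set (ℝ × ℝ)) (W : ℝ × ℝ → ℝ) (n : ℕ) (K : ℝ × ℝ → ℝ × ℝ → ℝ) : Prop :=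
  (∃ KP : MvPolynomial (Fin 4) ℝ,
    ∀ x y : ℝ × ℝ, K x y = MvPolynomial.eval ![x.1, x.2, y.1, y.2] KP) ∧
  (∀ x ∈ D, ∃ P : MvPolynomial (Fin 2) ℝ, P.totalDegree ≤ n ∧ ∀ y, K x y = evalP P y) ∧
  (∀ P : MvPolynomial (Fin 2) ℝ, P.totalDegree ≤ n →
    ∀ x ∈ D, (∫ y in D, K x y * evalP P y * W y) = evalP P x)

/-- `p` is the sequence of orthonormal polynomials with respect to the weight `w`
on `[-1,1]`: `p n` has degree exactly `n`, positive leading coefficient, and the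
`p n` are orthonormal in `L²(w)`. -/
def IsONPS (w : ℝ → ℝ) (p : ℕ → Polynomial ℝ) : Prop :=
  (∀ n, (p n).natDegree = n) ∧ (∀ n, 0 < (p n).leadingCoeff) ∧
  (∀ n m, (∫ x in Icc (-1:ℝ) 1, (p n).eval x * (p m).eval x * w x)
    = if n = m then 1 else 0)

/-- The Christoffel–Darboux kernel `k_n(x,y) = ∑_{j=0}^n p_j(x) p_j(y)`. -/
def CDK (p : ℕ → Polynomial ℝ) (n : ℕ) (x y : ℝ) : ℝ :=
  ∑ j ∈ Finset.range (n + 1), (p j).eval x * (p j).eval y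

/-- The Jacobi factor `J_{a,b}(x) = (1-x)^a (1+x)^b`. -/
def Jw (a b : ℝ) (x : ℝ) : ℝ := (1 - x) ^ a * (1 + x) ^ b

/-- The factor `J*_{a,b}(u,v) = (1-u+v)^a (1+u+v)^b` on `Ω`. -/
def JstarW (a b : ℝ) (q : ℝ × ℝ) : ℝ := (1 - q.1 + q.2) ^ a * (1 + q.1 + q.2) ^ b

/-- Modulus of continuity of `ψ` on `[-1,1]`. -/
def modCont (ψ : ℝ → ℝ) (t : ℝ) : ℝ :=
  sSup {d : ℝ | ∃ x ∈ Icc (-1:ℝ) 1, ∃ y ∈ Icc (-1:ℝ) 1, |x - y| ≤ t ∧ d = |ψ x - ψ y|}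

/-- The generalized Jacobi class `GJ`. -/
def IsGJ (w : ℝ → ℝ) : Prop :=
  ∃ (r : ℕ) (ψ : ℝ → ℝ) (γ₀ γ₁ : ℝ) (γs xs : Fin r → ℝ),
    -1 < γ₀ ∧ -1 < γ₁ ∧ (∀ i, -1 < γs i) ∧
    StrictMono xs ∧ (∀ i, xs i ∈ Ioo (-1:ℝ) 1) ∧
    ContinuousOn ψ (Icc (-1:ℝ) 1) ∧ (∀ x ∈ Icc (-1:ℝ) 1, 0 < ψ x) ∧
    IntegrableOn (fun t => modCont ψ t / t) (Ioc (0:ℝ) 1) ∧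
    (∀ x : ℝ, |x| ≤ 1 → w x = ψ x * (1 - x) ^ γ₀ * (1 + x) ^ γ₁ * ∏ i, |x - xs i| ^ γs i) ∧
    (∀ x : ℝ, 1 < |x| → w x = 0)

/-- The `L^p`-norm `‖f‖_{w,e}` on `[-1,1]` (as an extended nonnegative real). -/
def lpnormI (w : ℝ → ℝ) (e : ℝ) (f : ℝ → ℝ) : ℝ≥0∞ :=
  (∫⁻ x in Icc (-1:ℝ) 1, ENNReal.ofReal (|f x| ^ e * w x)) ^ (1 / e)

/-- The `L^p`-norm `‖f‖_{W,e}` on a planar domain `D` (as an extended nonnegative real). -/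
def lpnormD (D : Set (ℝ × ℝ)) (W : ℝ × ℝ → ℝ) (e : ℝ) (f : ℝ × ℝ → ℝ) : ℝ≥0∞ :=
  (∫⁻ q in D, ENNReal.ofReal (|f q| ^ e * W q)) ^ (1 / e)

/-- The operator `s_n^{i,j}(w; f, x)` built from the Christoffel–Darboux kernel of the
orthonormal polynomials `pij` of the weight `J_{i,j} w`. -/
def snOp (w : ℝ → ℝ) (pij : ℕ → Polynomial ℝ) (i j : ℝ) (n : ℕ) (f : ℝ → ℝ) (x : ℝ) : ℝ :=
  Jw (i/2) (j/2) x * ∫ y in Icc (-1:ℝ) 1, f y * CDK pij n x y * Jw (i/2) (j/2) y * w y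

/-- Substitution `(x, y) ↦ (2 x y, x² + y² - 1)` on two-variable polynomials. -/
def quadSub (P : MvPolynomial (Fin 2) ℝ) : MvPolynomial (Fin 2) ℝ :=
  MvPolynomial.aeval
    ![2 * MvPolynomial.X 0 * MvPolynomial.X 1,
      MvPolynomial.X 0 ^ 2 + MvPolynomial.X 1 ^ 2 - 1] P

/-- A one-variable polynomial viewed as a polynomial in the first variable. -/
def polyX (q : Polynomial ℝ) : MvPolynomial (Fin 2) ℝ :=
  Polynomial.aeval (MvPolynomial.X 0) q

/-- A one-variable polynomial viewed as a polynomial in the second variable. -/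
def polyY (q : Polynomial ℝ) : MvPolynomial (Fin 2) ℝ :=
  Polynomial.aeval (MvPolynomial.X 1) q


/-- The quadratic map from the square to the closure of `Ω`. -/
def phiM (q : ℝ × ℝ) : ℝ × ℝ := (2*q.1*q.2, q.1^2 + q.2^2 - 1)

/-- The fundamental triangle. -/
def funT : Set (ℝ × ℝ) := {q | -q.2 < q.1 ∧ q.1 < q.2 ∧ q.2 < 1}

lemma isOpen_funT : IsOpen funT := by
  have h1 : IsOpen {q : ℝ × ℝ | -q.2 < q.1} := isOpen_lt (by fun_prop) (by fun_prop)
  have h2 : IsOpen {q : ℝ × ℝ | q.1 < q.2} := isOpen_lt (by fun_prop) (by fun_prop)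
  have h3 : IsOpen {q : ℝ × ℝ | q.2 < 1} := isOpen_lt (by fun_prop) (by fun_prop)
  exact h1.inter (h2.inter h3)

lemma phiM_mem (q : ℝ × ℝ) (h1 : q.1^2 < 1) (h2 : q.2^2 < 1) (h3 : q.1 + q.2 ≠ 0)
    (h4 : q.1 - q.2 ≠ 0) : phiM q ∈ omegaDom := by
  obtain ⟨a, b⟩ := q
  simp only at h1 h2 h3 h4
  have hpos : 0 < (1 - a^2) * (1 - b^2) := mul_pos (by linarith) (by linarith)
  set r := Real.sqrt ((1 - a^2) * (1 - b^2)) with hr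
  have hr0 : 0 < r := Real.sqrt_pos.2 hpos
  have hr2 : r^2 = (1 - a^2) * (1 - b^2) := Real.sq_sqrt hpos.le
  have e1 : 0 < (a + b)^2 := by positivity
  have e2 : 0 < (a - b)^2 := by positivity
  have hab : (a*b)^2 < 1 := by nlinarith [sq_nonneg a, sq_nonneg b]
  have hab1 : a*b < 1 := by nlinarith
  have hab2 : -1 < a*b := by nlinarith
  refine ⟨a*b - r, a*b + r, ?_, by linarith, ?_, ?_⟩
  · have : (1 + a*b - r) * (1 + a*b + r) = (a+b)^2 := by ring_nf; rw [hr2]; ring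
    have : 0 < (1 + a*b - r) := by
      by_contra h
      nlinarith
    linarith
  · have : (1 - a*b - r) * (1 - a*b + r) = (a-b)^2 := by ring_nf; rw [hr2]; ring
    have : 0 < (1 - a*b - r) := by
      by_contra h
      nlinarith
    linarith
  · simp only [phiM]
    ext
    · simp only; ring
    · simp only; ring_nf; rw [hr2]; ring

lemma phiM_image : phiM '' funT = omegaDom := by
  ext s
  constructor
  · rintro ⟨⟨a, b⟩, ⟨h1, h2, h3⟩, rfl⟩
    simp only at h1 h2 h3
    apply phiM_mem
    · simp only; nlinarith
    · simp only; nlinarith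
    · simp only; linarith
    · simp only; linarith
  · rintro ⟨X, Y, h1, h2, h3, rfl⟩
    have hA : 0 < (1 + X) * (1 + Y) := mul_pos (by linarith) (by linarith)
    have hB : 0 < (1 - X) * (1 - Y) := mul_pos (by linarith) (by linarith)
    set A := Real.sqrt ((1 + X) * (1 + Y)) with hAd
    set B := Real.sqrt ((1 - X) * (1 - Y)) with hBd
    have hA0 : 0 < A := Real.sqrt_pos.2 hA
    have hB0 : 0 < B := Real.sqrt_pos.2 hB
    have hA2 : A^2 = (1 + X) * (1 + Y) := Real.sq_sqrt hA.le
    have hB2 : B^2 = (1 - X) * (1 - Y) := Real.sq_sqrt hB.le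
    refine ⟨((A - B)/2, (A + B)/2), ⟨by simp only; linarith, by simp only; linarith, ?_⟩, ?_⟩
    · simp only
      have h5 : (A*B)^2 < (1 - X*Y)^2 := by
        rw [mul_pow, hA2, hB2]
        nlinarith [mul_pos (sub_pos.2 h2) (sub_pos.2 h2)]
      have h6 : 0 < 1 - X*Y := by nlinarith
      have h7 : A*B < 1 - X*Y := by nlinarith [mul_pos hA0 hB0]
      nlinarith
    · simp only [phiM]
      ext
      · simp only; nlinarith
      · simp only; nlinarith

lemma phiM_injOn : InjOn phiM funT := by
  rintro ⟨a, b⟩ ⟨h1, h2, h3⟩ ⟨c, d⟩ ⟨h4, h5, h6⟩ h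
  simp only [phiM, Prod.mk.injEq] at h h1 h2 h3 h4 h5 h6
  obtain ⟨e1, e2⟩ := h
  have s1 : a + b = c + d := by
    have : (a + b)^2 = (c + d)^2 := by linarith
    exact (sq_eq_sq₀ (by linarith) (by linarith)).1 this
  have s2 : b - a = d - c := by
    have : (b - a)^2 = (d - c)^2 := by linarith
    exact (sq_eq_sq₀ (by linarith) (by linarith)).1 this
  ext
  · simp only; linarith
  · simp only; linarith

/-- Derivative of `phiM`. -/
def phiD (p : ℝ × ℝ) : ℝ × ℝ →L[ℝ] ℝ × ℝ :=
  (Matrix.toLin (.finTwoProd ℝ) (.finTwoProd ℝ)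
    !![2 * p.2, 2 * p.1; 2 * p.1, 2 * p.2]).toContinuousLinearMap

lemma phiD_det (p : ℝ × ℝ) : (phiD p).det = 4 * (p.2^2 - p.1^2) := by
  unfold phiD
  simp only [LinearMap.det_toContinuousLinearMap, LinearMap.det_toLin, Matrix.det_fin_two_of]
  ring

lemma hasFDerivAt_phiM (p : ℝ × ℝ) : HasFDerivAt phiM (phiD p) p := by
  unfold phiD
  rw [Matrix.toLin_finTwoProd_toContinuousLinearMap]
  have h1 : HasFDerivAt (fun q : ℝ × ℝ => q.1) (ContinuousLinearMap.fst ℝ ℝ ℝ) p := hasFDerivAt_fst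
  have h2 : HasFDerivAt (fun q : ℝ × ℝ => q.2) (ContinuousLinearMap.snd ℝ ℝ ℝ) p := hasFDerivAt_snd
  have := HasFDerivAt.prodMk (𝕜 := ℝ) ((h1.const_mul 2).mul h2)
    (((h1.pow 2).add (h2.pow 2)).sub_const 1)
  refine (this.congr_fderiv ?_)
  ext <;> simp <;> ring

lemma integral_omega (H : ℝ × ℝ → ℝ) :
    ∫ q in omegaDom, H q = ∫ q in funT, 4 * |q.1^2 - q.2^2| * H (phiM q) := by
  rw [← phiM_image, integral_image_eq_integral_abs_det_fderiv_smul volume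
    isOpen_funT.measurableSet (fun x _ => (hasFDerivAt_phiM x).hasFDerivWithinAt) phiM_injOn]
  congr 1
  ext q
  rw [phiD_det, abs_mul, abs_sub_comm]
  simp

lemma measurable_omega : MeasurableSet omegaDom := by
  rw [← phiM_image]
  exact measurable_image_of_fderivWithin isOpen_funT.measurableSet
    (fun x _ => (hasFDerivAt_phiM x).hasFDerivWithinAt) phiM_injOn

lemma omega_subset : omegaDom ⊆ Icc (-2:ℝ) 2 ×ˢ Icc (-1:ℝ) 1 := by
  rintro q ⟨x, y, h1, h2, h3, rfl⟩
  refine ⟨⟨by simp only; linarith, by simp only; linarith⟩, ⟨by simp only; nlinarith, by simp only; nlinarith⟩⟩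

lemma isCompact_sq : IsCompact sqDom := isCompact_Icc.prod isCompact_Icc

/-- Fourfold folding of the integral over the square. -/
lemma integral_sq (f : ℝ × ℝ → ℝ) (hf : IntegrableOn f sqDom)
    (h1 : ∀ q, q.1 + q.2 = 0 → f q = 0) (h2 : ∀ q, q.1 - q.2 = 0 → f q = 0) :
    ∫ q in sqDom, f q = ∫ q in funT, (f q + f (q.2, q.1) + f (-q.1, -q.2) + f (-q.2, -q.1)) := by
  set T1 : Set (ℝ × ℝ) := Prod.swap ⁻¹' funT with hT1
  set T2 : Set (ℝ × ℝ) := Neg.neg ⁻¹' funT with hT2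
  set T3 : Set (ℝ × ℝ) := Neg.neg ⁻¹' T1 with hT3
  have m0 : MeasurableSet funT := isOpen_funT.measurableSet
  have m1 : MeasurableSet T1 := measurable_swap m0
  have m2 : MeasurableSet T2 := measurable_neg m0
  have m3 : MeasurableSet T3 := measurable_neg m1
  have sw : MeasurePreserving (Prod.swap : ℝ × ℝ → ℝ × ℝ) volume volume :=
    Measure.measurePreserving_swap
  have ng : MeasurePreserving (Neg.neg : ℝ × ℝ → ℝ × ℝ) volume volume :=
    Measure.measurePreserving_neg volume
  have swe : MeasurableEmbedding (Prod.swap : ℝ × ℝ → ℝ × ℝ) :=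
    (MeasurableEquiv.prodComm (α := ℝ) (β := ℝ)).measurableEmbedding
  have nge : MeasurableEmbedding (Neg.neg : ℝ × ℝ → ℝ × ℝ) :=
    (MeasurableEquiv.neg (ℝ × ℝ)).measurableEmbedding
  have hae : (sqDom : Set (ℝ × ℝ)) =ᵐ[volume] (Ioo (-1:ℝ) 1 ×ˢ Ioo (-1:ℝ) 1 : Set (ℝ × ℝ)) :=
    (Measure.set_prod_ae_eq Ioo_ae_eq_Icc Ioo_ae_eq_Icc).symm
  have s0 : funT ⊆ sqDom := by
    rintro ⟨a, b⟩ ⟨x1, x2, x3⟩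
    simp only at x1 x2 x3
    exact ⟨⟨by simp only; linarith, by simp only; linarith⟩,
      ⟨by simp only; linarith, by simp only; linarith⟩⟩
  have s1 : T1 ⊆ sqDom := by
    rintro ⟨a, b⟩ ⟨x1, x2, x3⟩
    simp only [Prod.swap] at x1 x2 x3
    exact ⟨⟨by simp only; linarith, by simp only; linarith⟩,
      ⟨by simp only; linarith, by simp only; linarith⟩⟩
  have s2 : T2 ⊆ sqDom := by
    rintro ⟨a, b⟩ ⟨x1, x2, x3⟩
    simp only [Prod.neg_mk] at x1 x2 x3
    exact ⟨⟨by simp only; linarith, by simp only; linarith⟩,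
      ⟨by simp only; linarith, by simp only; linarith⟩⟩
  have s3 : T3 ⊆ sqDom := by
    rintro ⟨a, b⟩ ⟨x1, x2, x3⟩
    simp only [Prod.neg_mk, Prod.swap] at x1 x2 x3
    exact ⟨⟨by simp only; linarith, by simp only; linarith⟩,
      ⟨by simp only; linarith, by simp only; linarith⟩⟩
  have i0 := hf.mono_set s0
  have i1 := hf.mono_set s1
  have i2 := hf.mono_set s2
  have i3 := hf.mono_set s3
  have d1 : Disjoint funT T1 := by
    rw [Set.disjoint_left]
    rintro ⟨a, b⟩ ⟨x1, x2, x3⟩ ⟨y1, y2, y3⟩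
    simp only [Prod.neg_mk, Prod.swap] at x1 x2 x3 y1 y2 y3
    linarith
  have d2 : Disjoint (funT ∪ T1) T2 := by
    rw [Set.disjoint_left]
    rintro ⟨a, b⟩ (⟨x1, x2, x3⟩ | ⟨x1, x2, x3⟩) ⟨y1, y2, y3⟩ <;>
    simp only [Prod.neg_mk, Prod.swap] at x1 x2 x3 y1 y2 y3 <;>
    linarith
  have d3 : Disjoint (funT ∪ T1 ∪ T2) T3 := by
    rw [Set.disjoint_left]
    rintro ⟨a, b⟩ ((⟨x1, x2, x3⟩ | ⟨x1, x2, x3⟩) | ⟨x1, x2, x3⟩) ⟨y1, y2, y3⟩ <;>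
    simp only [Prod.neg_mk, Prod.swap] at x1 x2 x3 y1 y2 y3 <;>
    linarith
  have hsub : funT ∪ T1 ∪ T2 ∪ T3 ⊆ (Ioo (-1:ℝ) 1 ×ˢ Ioo (-1:ℝ) 1 : Set (ℝ × ℝ)) := by
    rintro ⟨a, b⟩ (((⟨x1, x2, x3⟩ | ⟨x1, x2, x3⟩) | ⟨x1, x2, x3⟩) | ⟨x1, x2, x3⟩) <;>
    simp only [Prod.neg_mk, Prod.swap] at x1 x2 x3 <;>
    exact ⟨⟨by simp only; linarith, by simp only; linarith⟩,
      ⟨by simp only; linarith, by simp only; linarith⟩⟩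
  have e1 : ∫ q in sqDom, f q = ∫ q in funT ∪ T1 ∪ T2 ∪ T3, f q := by
    rw [setIntegral_congr_set hae]
    apply setIntegral_eq_of_subset_of_forall_sdiff_eq_zero
      (measurableSet_Ioo.prod measurableSet_Ioo) hsub
    rintro ⟨a, b⟩ ⟨⟨⟨x1, x2⟩, ⟨x3, x4⟩⟩, hn⟩
    simp only at x1 x2 x3 x4
    by_cases c1 : a + b = 0
    · exact h1 _ c1
    by_cases c2 : a - b = 0
    · exact h2 _ c2
    exfalso
    apply hn
    rcases lt_or_gt_of_ne c1 with c1 | c1 <;> rcases lt_or_gt_of_ne c2 with c2 | c2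
    · right
      exact ⟨by simp only [Prod.neg_mk, Prod.swap]; linarith,
        by simp only [Prod.neg_mk, Prod.swap]; linarith,
        by simp only [Prod.neg_mk, Prod.swap]; linarith⟩
    · left; right
      exact ⟨by simp only [Prod.neg_mk]; linarith,
        by simp only [Prod.neg_mk]; linarith,
        by simp only [Prod.neg_mk]; linarith⟩
    · left; left; left
      exact ⟨by simp only; linarith, by simp only; linarith, by simp only; linarith⟩
    · left; left; right
      exact ⟨by simp only [Prod.swap]; linarith,
        by simp only [Prod.swap]; linarith,
        by simp only [Prod.swap]; linarith⟩
  have p1 : Prod.swap ⁻¹' T1 = funT := by ext q; simp [hT1]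
  have p2 : Neg.neg ⁻¹' T2 = funT := by ext q; simp [hT2]
  have p3 : Neg.neg ⁻¹' T3 = T1 := by ext q; simp [hT3]
  have q1 : ∫ q in T1, f q = ∫ q in funT, f q.swap := by
    rw [← sw.setIntegral_preimage_emb swe f T1, p1]
  have q2 : ∫ q in T2, f q = ∫ q in funT, f (-q) := by
    rw [← ng.setIntegral_preimage_emb nge f T2, p2]
  have q3 : ∫ q in T3, f q = ∫ q in funT, f (-q.swap) := by
    rw [← ng.setIntegral_preimage_emb nge f T3, p3,
      ← sw.setIntegral_preimage_emb swe (fun q => f (-q)) T1, p1]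
  have j1 : IntegrableOn (fun q => f q.swap) funT := by
    rw [← p1]; exact (sw.integrableOn_comp_preimage swe).2 i1
  have j2 : IntegrableOn (fun q => f (-q)) funT := by
    rw [← p2]; exact (ng.integrableOn_comp_preimage nge).2 i2
  have j3 : IntegrableOn (fun q => f (-q.swap)) funT := by
    have : IntegrableOn (fun q => f (-q)) T1 := by
      rw [← p3]; exact (ng.integrableOn_comp_preimage nge).2 i3
    rw [← p1]; exact (sw.integrableOn_comp_preimage swe).2 this
  have k1 : IntegrableOn (fun q => f q + f q.swap) funT := i0.add j1
  have k2 : IntegrableOn (fun q => f q + f q.swap + f (-q)) funT := k1.add j2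
  rw [e1, setIntegral_union d3 m3 ((i0.union i1).union i2) i3,
    setIntegral_union d2 m2 (i0.union i1) i2, setIntegral_union d1 m1 i0 i1, q1, q2, q3,
    ← integral_add i0 j1, ← integral_add k1 j2, ← integral_add k2 j3]
  rfl

/-- Parallel integral formula for products of decomposed functions. -/
lemma integral_prod (W : ℝ × ℝ → ℝ) (g0 g1 g2 g3 h0 h1 h2 h3 : ℝ × ℝ → ℝ)
    (hi : IntegrableOn (fun y : ℝ × ℝ =>
      (g0 (phiM y) + (y.1^2 - y.2^2) * g1 (phiM y) + (y.1 + y.2) * g2 (phiM y)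
        + (y.1 - y.2) * g3 (phiM y)) *
      (h0 (phiM y) + (y.1^2 - y.2^2) * h1 (phiM y) + (y.1 + y.2) * h2 (phiM y)
        + (y.1 - y.2) * h3 (phiM y)) * (W (phiM y) * |y.1^2 - y.2^2|)) sqDom) :
    ∫ y in sqDom, (g0 (phiM y) + (y.1^2 - y.2^2) * g1 (phiM y) + (y.1 + y.2) * g2 (phiM y)
        + (y.1 - y.2) * g3 (phiM y)) *
      (h0 (phiM y) + (y.1^2 - y.2^2) * h1 (phiM y) + (y.1 + y.2) * h2 (phiM y)
        + (y.1 - y.2) * h3 (phiM y)) * (W (phiM y) * |y.1^2 - y.2^2|) =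
    ∫ t in omegaDom, (g0 t * h0 t + (1 + t.1 + t.2) * (1 - t.1 + t.2) * (g1 t * h1 t)
      + (1 + t.1 + t.2) * (g2 t * h2 t) + (1 - t.1 + t.2) * (g3 t * h3 t)) * W t := by
  rw [integral_sq _ hi, integral_omega]
  · congr 1
    ext q
    have r1 : phiM (q.2, q.1) = phiM q := by
      simp only [phiM]; ext
      · simp only; ring
      · simp only; ring
    have r2 : phiM (-q.1, -q.2) = phiM q := by
      simp only [phiM]; ext
      · simp only; ring
      · simp only; ring
    have r3 : phiM (-q.2, -q.1) = phiM q := by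
      simp only [phiM]; ext
      · simp only; ring
      · simp only; ring
    have v1 : 1 + (phiM q).1 + (phiM q).2 = (q.1 + q.2)^2 := by simp only [phiM]; ring
    have v2 : 1 - (phiM q).1 + (phiM q).2 = (q.1 - q.2)^2 := by simp only [phiM]; ring
    rw [r1, r2, r3, v1, v2]
    simp only
    have z1 : |q.2^2 - q.1^2| = |q.1^2 - q.2^2| := abs_sub_comm _ _
    have z2 : |(-q.1)^2 - (-q.2)^2| = |q.1^2 - q.2^2| := by simp
    have z3 : |(-q.2)^2 - (-q.1)^2| = |q.1^2 - q.2^2| := by simp [z1]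
    rw [z1, z2, z3]
    ring
  · intro q hq
    have : q.1^2 - q.2^2 = 0 := by
      have : q.1^2 - q.2^2 = (q.1 + q.2) * (q.1 - q.2) := by ring
      rw [this, hq, zero_mul]
    simp [this]
  · intro q hq
    have : q.1^2 - q.2^2 = 0 := by
      have : q.1^2 - q.2^2 = (q.1 + q.2) * (q.1 - q.2) := by ring
      rw [this, hq, mul_zero]
    simp [this]

lemma evalP_add (P Q : MvPolynomial (Fin 2) ℝ) (q : ℝ × ℝ) :
    evalP (P + Q) q = evalP P q + evalP Q q := by simp [evalP]

lemma evalP_sub (P Q : MvPolynomial (Fin 2) ℝ) (q : ℝ × ℝ) :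
    evalP (P - Q) q = evalP P q - evalP Q q := by simp [evalP]

lemma evalP_mul (P Q : MvPolynomial (Fin 2) ℝ) (q : ℝ × ℝ) :
    evalP (P * Q) q = evalP P q * evalP Q q := by simp [evalP]

lemma evalP_C (c : ℝ) (q : ℝ × ℝ) : evalP (MvPolynomial.C c) q = c := by simp [evalP]

lemma evalP_zero (q : ℝ × ℝ) : evalP 0 q = 0 := by simp [evalP]

lemma evalP_one (q : ℝ × ℝ) : evalP 1 q = 1 := by simp [evalP]

lemma evalP_X0 (q : ℝ × ℝ) : evalP (MvPolynomial.X 0) q = q.1 := by simp [evalP]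

lemma evalP_X1 (q : ℝ × ℝ) : evalP (MvPolynomial.X 1) q = q.2 := by simp [evalP]

lemma evalP_cont (P : MvPolynomial (Fin 2) ℝ) : Continuous (evalP P) := by
  unfold evalP
  have h : Continuous (fun q : ℝ × ℝ => (![q.1, q.2] : Fin 2 → ℝ)) := by
    refine continuous_pi fun i => ?_
    fin_cases i
    · exact continuous_fst
    · exact continuous_snd
  exact (MvPolynomial.continuous_eval P).comp h

lemma evalP_expand (P : MvPolynomial (Fin 2) ℝ) (q : ℝ × ℝ) :
    evalP P q = ∑ m ∈ P.support, P.coeff m * (q.1 ^ (m 0) * q.2 ^ (m 1)) := by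
  simp [evalP, MvPolynomial.eval_eq', Fin.prod_univ_two]

lemma deg_le_of_mem {P : MvPolynomial (Fin 2) ℝ} {m : Fin 2 →₀ ℕ} (h : m ∈ P.support) :
    m 0 + m 1 ≤ P.totalDegree := by
  have := MvPolynomial.le_totalDegree h
  rw [Finsupp.sum_fintype _ _ (fun _ => rfl), Fin.sum_univ_two] at this
  exact this

/-- A function given by a polynomial of total degree at most `n`. -/
def PolyF (n : ℕ) (f : ℝ × ℝ → ℝ) : Prop :=
  ∃ P : MvPolynomial (Fin 2) ℝ, P.totalDegree ≤ n ∧ ∀ q, f q = evalP P q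

lemma PolyF.add {n : ℕ} {f g : ℝ × ℝ → ℝ} (hf : PolyF n f) (hg : PolyF n g) :
    PolyF n (fun q => f q + g q) := by
  obtain ⟨P, hP, eP⟩ := hf
  obtain ⟨Q, hQ, eQ⟩ := hg
  exact ⟨P + Q, (MvPolynomial.totalDegree_add _ _).trans (max_le hP hQ),
    fun q => by simp only [evalP_add, eP, eQ]⟩

lemma PolyF.mul {n m : ℕ} {f g : ℝ × ℝ → ℝ} (hf : PolyF n f) (hg : PolyF m g) :
    PolyF (n + m) (fun q => f q * g q) := by
  obtain ⟨P, hP, eP⟩ := hf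
  obtain ⟨Q, hQ, eQ⟩ := hg
  exact ⟨P * Q, (MvPolynomial.totalDegree_mul _ _).trans (add_le_add hP hQ),
    fun q => by simp only [evalP_mul, eP, eQ]⟩

lemma PolyF.const (c : ℝ) (n : ℕ) : PolyF n (fun _ => c) :=
  ⟨MvPolynomial.C c, by simp, fun q => (evalP_C c q).symm⟩

lemma PolyF.mono {n m : ℕ} {f : ℝ × ℝ → ℝ} (hf : PolyF n f) (h : n ≤ m) : PolyF m f := by
  obtain ⟨P, hP, eP⟩ := hf
  exact ⟨P, hP.trans h, eP⟩

lemma PolyF.fst : PolyF 1 (fun q => q.1) :=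
  ⟨MvPolynomial.X 0, by simp, fun q => (evalP_X0 q).symm⟩

lemma PolyF.snd : PolyF 1 (fun q => q.2) :=
  ⟨MvPolynomial.X 1, by simp, fun q => (evalP_X1 q).symm⟩

lemma PolyF.pow {n : ℕ} {f : ℝ × ℝ → ℝ} (hf : PolyF n f) (k : ℕ) :
    PolyF (n * k) (fun q => f q ^ k) := by
  induction k with
  | zero => simpa using PolyF.const 1 _
  | succ k ih =>
    have := ih.mul hf
    simpa [pow_succ, Nat.mul_succ] using this

lemma PolyF.sum {ι : Type*} {n : ℕ} (s : Finset ι) (F : ι → ℝ × ℝ → ℝ)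
    (h : ∀ i ∈ s, PolyF n (F i)) : PolyF n (fun q => ∑ i ∈ s, F i q) := by
  classical
  induction s using Finset.induction_on with
  | empty => simpa using PolyF.const 0 n
  | insert a s ha ih =>
    have := (h a (Finset.mem_insert_self _ _)).add
      (ih fun i hi => h i (Finset.mem_insert_of_mem hi))
    simpa [Finset.sum_insert ha] using this

lemma PolyF.comp_phi {n : ℕ} {f : ℝ × ℝ → ℝ} (hf : PolyF n f) :
    PolyF (2 * n) (fun q => f (phiM q)) := by
  obtain ⟨P, hP, eP⟩ := hf
  have h1 : PolyF 2 (fun q => (phiM q).1) := by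
    simpa [phiM] using! ((PolyF.const 2 0).mul PolyF.fst).mul PolyF.snd
  have h2 : PolyF 2 (fun q => (phiM q).2) := by
    have := ((PolyF.fst.pow 2).add (PolyF.snd.pow 2)).add (PolyF.const (-1) _)
    simpa [phiM, sub_eq_add_neg] using this
  have : PolyF (2 * n) (fun q => ∑ m ∈ P.support,
      P.coeff m * ((phiM q).1 ^ (m 0) * (phiM q).2 ^ (m 1))) := by
    apply PolyF.sum
    intro m hm
    refine ((PolyF.const _ 0).mul ((h1.pow _).mul (h2.pow _))).mono ?_
    have := deg_le_of_mem hm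
    omega
  obtain ⟨Q, hQ, eQ⟩ := this
  exact ⟨Q, hQ, fun q => by rw [← eQ]; simp only [eP]; rw [evalP_expand]⟩

/-- Degree bound `2 deg p + c ≤ n`, or `p = 0`. -/
def DB (c n : ℕ) (p : MvPolynomial (Fin 2) ℝ) : Prop := p = 0 ∨ 2 * p.totalDegree + c ≤ n

lemma DB.add {c n : ℕ} {p q : MvPolynomial (Fin 2) ℝ} (hp : DB c n p) (hq : DB c n q) :
    DB c n (p + q) := by
  rcases hp with rfl | hp
  · simpa using hq
  rcases hq with rfl | hq
  · right; simpa using hp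
  right
  have := MvPolynomial.totalDegree_add p q
  rcases le_max_iff.1 this with h | h <;> omega

lemma DB.smul {c n : ℕ} {p : MvPolynomial (Fin 2) ℝ} (hp : DB c n p) (r : ℝ) :
    DB c n (MvPolynomial.C r * p) := by
  rcases hp with rfl | hp
  · left; simp
  right
  have := MvPolynomial.totalDegree_mul (MvPolynomial.C r) p
  rw [MvPolynomial.totalDegree_C] at this
  omega

lemma DB.mono {c n m : ℕ} {p : MvPolynomial (Fin 2) ℝ} (hp : DB c n p) (h : n ≤ m) :
    DB c m p := by
  rcases hp with rfl | hp
  · left; rfl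
  right; omega

lemma DB.zero (c n : ℕ) : DB c n 0 := Or.inl rfl

lemma DB.shift {c n : ℕ} {p : MvPolynomial (Fin 2) ℝ} (hp : DB c n p) : DB (c+1) (n+1) p := by
  rcases hp with rfl | hp
  · left; rfl
  right; omega

lemma DB.mul_lin {c n : ℕ} {p L : MvPolynomial (Fin 2) ℝ} (hL : L.totalDegree ≤ 1)
    (hp : DB (c+1) n p) : DB c (n+1) (L * p) := by
  rcases hp with rfl | hp
  · left; simp
  right
  have := MvPolynomial.totalDegree_mul L p
  omega

/-- Decomposition of functions on the square under the group of symmetries. -/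
def Dec (n : ℕ) (f : ℝ × ℝ → ℝ) : Prop :=
  ∃ p0 p1 p2 p3 : MvPolynomial (Fin 2) ℝ, DB 0 n p0 ∧ DB 2 n p1 ∧ DB 1 n p2 ∧ DB 1 n p3 ∧
    ∀ q : ℝ × ℝ, f q = evalP p0 (phiM q) + (q.1^2 - q.2^2) * evalP p1 (phiM q)
      + (q.1 + q.2) * evalP p2 (phiM q) + (q.1 - q.2) * evalP p3 (phiM q)

lemma Dec.add {n : ℕ} {f g : ℝ × ℝ → ℝ} (hf : Dec n f) (hg : Dec n g) :
    Dec n (fun q => f q + g q) := by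
  obtain ⟨p0, p1, p2, p3, h0, h1, h2, h3, e⟩ := hf
  obtain ⟨q0, q1, q2, q3, k0, k1, k2, k3, e'⟩ := hg
  refine ⟨_, _, _, _, h0.add k0, h1.add k1, h2.add k2, h3.add k3, fun q => ?_⟩
  simp only [evalP_add, e, e']
  ring

lemma Dec.smul {n : ℕ} {f : ℝ × ℝ → ℝ} (hf : Dec n f) (c : ℝ) :
    Dec n (fun q => c * f q) := by
  obtain ⟨p0, p1, p2, p3, h0, h1, h2, h3, e⟩ := hf
  refine ⟨_, _, _, _, h0.smul c, h1.smul c, h2.smul c, h3.smul c, fun q => ?_⟩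
  simp only [evalP_mul, evalP_C, e]
  ring

lemma Dec.mono {n m : ℕ} {f : ℝ × ℝ → ℝ} (hf : Dec n f) (h : n ≤ m) : Dec m f := by
  obtain ⟨p0, p1, p2, p3, h0, h1, h2, h3, e⟩ := hf
  exact ⟨_, _, _, _, h0.mono h, h1.mono h, h2.mono h, h3.mono h, e⟩

lemma Dec.mulA {n : ℕ} {f : ℝ × ℝ → ℝ} (hf : Dec n f) :
    Dec (n+1) (fun q => (q.1 + q.2) * f q) := by
  obtain ⟨p0, p1, p2, p3, h0, h1, h2, h3, e⟩ := hf
  have hL : (1 + MvPolynomial.X 0 + MvPolynomial.X 1 : MvPolynomial (Fin 2) ℝ).totalDegree ≤ 1 := by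
    refine (MvPolynomial.totalDegree_add _ _).trans (max_le ?_ (by simp))
    exact (MvPolynomial.totalDegree_add _ _).trans (max_le (by simp) (by simp))
  refine ⟨_, p3, p0, _, h2.mul_lin hL, h3.shift, h0.shift, h1.mul_lin hL, fun q => ?_⟩
  simp only [evalP_mul, evalP_add, evalP_one, evalP_X0, evalP_X1, e, phiM]
  ring

lemma Dec.mulB {n : ℕ} {f : ℝ × ℝ → ℝ} (hf : Dec n f) :
    Dec (n+1) (fun q => (q.1 - q.2) * f q) := by
  obtain ⟨p0, p1, p2, p3, h0, h1, h2, h3, e⟩ := hf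
  have hL : (1 - MvPolynomial.X 0 + MvPolynomial.X 1 : MvPolynomial (Fin 2) ℝ).totalDegree ≤ 1 := by
    refine (MvPolynomial.totalDegree_add _ _).trans (max_le ?_ (by simp))
    exact (MvPolynomial.totalDegree_sub _ _).trans (max_le (by simp) (by simp))
  refine ⟨_, p2, _, p0, h3.mul_lin hL, h2.shift, h1.mul_lin hL, h0.shift, fun q => ?_⟩
  simp only [evalP_mul, evalP_add, evalP_sub, evalP_one, evalP_X0, evalP_X1, e, phiM]
  ring

lemma Dec.const (c : ℝ) : Dec 0 (fun _ => c) :=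
  ⟨MvPolynomial.C c, 0, 0, 0, Or.inr (by simp), DB.zero _ _, DB.zero _ _, DB.zero _ _,
    fun q => by simp [evalP_C, evalP_zero]⟩

lemma Dec.mono_fn (a b : ℕ) : Dec (a + b) (fun q => q.1 ^ a * q.2 ^ b) := by
  induction a with
  | zero =>
    induction b with
    | zero => simpa using Dec.const 1
    | succ b ih =>
      have := (ih.mulA.add (ih.mulB.smul (-1))).smul (1/2)
      have e : (fun q : ℝ × ℝ => q.1 ^ 0 * q.2 ^ (b+1)) = fun q : ℝ × ℝ => 1/2 *
        ((q.1 + q.2) * (q.1 ^ 0 * q.2 ^ b) + -1 * ((q.1 - q.2) * (q.1 ^ 0 * q.2 ^ b))) := by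
        ext q; ring
      rw [e]
      exact this
  | succ a ih =>
    have := ((ih.mulA.add ih.mulB).smul (1/2)).mono (show a + b + 1 ≤ a + 1 + b by omega)
    have e : (fun q : ℝ × ℝ => q.1 ^ (a+1) * q.2 ^ b) = fun q : ℝ × ℝ => 1/2 *
        ((q.1 + q.2) * (q.1 ^ a * q.2 ^ b) + ((q.1 - q.2) * (q.1 ^ a * q.2 ^ b))) := by
      ext q; ring
    rw [e]
    exact this

lemma Dec.sum {ι : Type*} {n : ℕ} (s : Finset ι) (F : ι → ℝ × ℝ → ℝ)
    (h : ∀ i ∈ s, Dec n (F i)) : Dec n (fun q => ∑ i ∈ s, F i q) := by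
  classical
  induction s using Finset.induction_on with
  | empty => simpa using (Dec.const 0).mono (Nat.zero_le n)
  | insert a s ha ih =>
    have := (h a (Finset.mem_insert_self _ _)).add
      (ih fun i hi => h i (Finset.mem_insert_of_mem hi))
    simpa [Finset.sum_insert ha] using this

lemma dec_poly {n : ℕ} (P : MvPolynomial (Fin 2) ℝ) (hP : P.totalDegree ≤ n) :
    Dec n (evalP P) := by
  have : Dec n (fun q => ∑ m ∈ P.support, P.coeff m * (q.1 ^ (m 0) * q.2 ^ (m 1))) := by
    apply Dec.sum
    intro m hm
    exact ((Dec.mono_fn _ _).smul _).mono ((deg_le_of_mem hm).trans hP)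
  have e : evalP P = fun q => ∑ m ∈ P.support, P.coeff m * (q.1 ^ (m 0) * q.2 ^ (m 1)) := by
    ext q; exact evalP_expand P q
  rw [e]; exact this

lemma polyF_of_DB {c n : ℕ} {Q : MvPolynomial (Fin 2) ℝ} (hQ : DB c n Q) {χ : ℝ × ℝ → ℝ}
    (hχ : PolyF c χ) : PolyF n (fun q => χ q * evalP Q (phiM q)) := by
  rcases hQ with rfl | hQ
  · simpa [evalP_zero] using PolyF.const 0 n
  · have : PolyF Q.totalDegree (evalP Q) := ⟨Q, le_rfl, fun _ => rfl⟩
    exact (hχ.mul this.comp_phi).mono (by omega)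

/-- Kernel adapted to the degree bound `DB`. -/
def GK (c n : ℕ) (W : ℝ × ℝ → ℝ) (k : ℝ × ℝ → ℝ × ℝ → ℝ) : Prop :=
  ∀ s ∈ omegaDom, ∃ Q : MvPolynomial (Fin 2) ℝ, DB c n Q ∧ (∀ y, k s y = evalP Q y) ∧
    ∀ p, DB c n p → ∫ y in omegaDom, evalP Q y * evalP p y * W y = evalP p s

lemma gk_of_rk {c n m : ℕ} {W : ℝ × ℝ → ℝ} {K k : ℝ × ℝ → ℝ × ℝ → ℝ}
    (hK : IsRK omegaDom W m K) (h1 : c ≤ n → k = K) (h2 : ¬ c ≤ n → k = fun _ _ => 0)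
    (h3 : c ≤ n → m = (n - c) / 2) : GK c n W k := by
  intro s hs
  by_cases h : c ≤ n
  · rw [h1 h]
    have hm := h3 h
    obtain ⟨-, hb, hc⟩ := hK
    obtain ⟨Q, hQ, eQ⟩ := hb s hs
    refine ⟨Q, Or.inr (by omega), eQ, fun p hp => ?_⟩
    rw [← hc p ?_ s hs]
    · simp only [eQ]
    · rcases hp with rfl | hp
      · simp
      · omega
  · rw [h2 h]
    refine ⟨0, DB.zero _ _, fun y => (evalP_zero y).symm, fun p hp => ?_⟩
    rcases hp with rfl | hp
    · simp [evalP_zero]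
    · omega

/-- The weight is integrable, from the reproduction of constants. -/
lemma rk_integrable {D : Set (ℝ × ℝ)} {W : ℝ × ℝ → ℝ} {K : ℝ × ℝ → ℝ × ℝ → ℝ}
    (hK : IsRK D W 0 K) (x : ℝ × ℝ) (hx : x ∈ D) : IntegrableOn W D := by
  obtain ⟨-, hb, hc⟩ := hK
  obtain ⟨Q, hQ, eQ⟩ := hb x hx
  have h := hc 1 (by simp) x hx
  have hQ' : Q = MvPolynomial.C (Q.coeff 0) :=
    MvPolynomial.totalDegree_eq_zero_iff_eq_C.1 (Nat.le_zero.1 hQ)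
  set c := Q.coeff 0
  have e : ∀ y, K x y = c := fun y => by rw [eQ, hQ', evalP_C]
  simp only [e, evalP_one, mul_one] at h
  have hne : ∫ y in D, c * W y ≠ 0 := by rw [h]; norm_num
  have hc0 : c ≠ 0 := by
    rintro h0
    simp [h0] at hne
  have hi : IntegrableOn (fun y => c * W y) D := not_imp_comm.1 integral_undef hne
  have := Integrable.const_mul hi c⁻¹
  refine this.congr (Eventually.of_forall fun y => ?_)
  simp only
  field_simp

lemma int_poly_omega {W : ℝ × ℝ → ℝ} (hW : IntegrableOn W omegaDom) {f : ℝ × ℝ → ℝ}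
    (hf : Continuous f) : IntegrableOn (fun y => f y * W y) omegaDom :=
  hW.continuousOn_mul_of_subset hf.continuousOn (isCompact_Icc.prod isCompact_Icc)
    measurable_omega omega_subset

lemma int_poly_sq {W : ℝ × ℝ → ℝ} (hW : IntegrableOn W sqDom) {f : ℝ × ℝ → ℝ}
    (hf : Continuous f) : IntegrableOn (fun y => f y * W y) sqDom :=
  hW.continuousOn_mul hf.continuousOn isCompact_sq

lemma continuous_phiM : Continuous phiM := by
  unfold phiM; fun_prop

lemma main_good {n : ℕ} {W0 W1 W2 W3 CW : ℝ × ℝ → ℝ} {d1 d2 d3 : ℝ}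
    {k0 k1 k2 k3 K : ℝ × ℝ → ℝ × ℝ → ℝ}
    (hW1 : ∀ t ∈ omegaDom, W1 t = d1 * ((1 + t.1 + t.2) * (1 - t.1 + t.2)) * W0 t)
    (hW2 : ∀ t ∈ omegaDom, W2 t = d2 * (1 + t.1 + t.2) * W0 t)
    (hW3 : ∀ t ∈ omegaDom, W3 t = d3 * (1 - t.1 + t.2) * W0 t)
    (g0 : GK 0 n W0 k0) (g1 : GK 2 n W1 k1) (g2 : GK 1 n W2 k2) (g3 : GK 1 n W3 k3)
    (hK : IsRK sqDom CW n K)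
    (hCW : ∀ q : ℝ × ℝ, CW q = W0 (phiM q) * |q.1^2 - q.2^2|)
    (hpos : ∀ q ∈ sqDom, 0 ≤ CW q)
    (iC : IntegrableOn CW sqDom) (iW : IntegrableOn W0 omegaDom)
    (x y : ℝ × ℝ) (hx : x ∈ sqDom) (hy : y ∈ sqDom) (hxs : phiM x ∈ omegaDom) :
    K x y = k0 (phiM x) (phiM y)
      + d1 * (x.1^2 - x.2^2) * (y.1^2 - y.2^2) * k1 (phiM x) (phiM y)
      + d2 * (x.1 + x.2) * (y.1 + y.2) * k2 (phiM x) (phiM y)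
      + d3 * (x.1 - x.2) * (y.1 - y.2) * k3 (phiM x) (phiM y) := by
  obtain ⟨-, hb, hc⟩ := hK
  obtain ⟨P, hP, eP⟩ := hb x hx
  obtain ⟨Q0, b0, e0, r0⟩ := g0 _ hxs
  obtain ⟨Q1, b1, e1, r1⟩ := g1 _ hxs
  obtain ⟨Q2, b2, e2, r2⟩ := g2 _ hxs
  obtain ⟨Q3, b3, e3, r3⟩ := g3 _ hxs
  -- the right-hand side as a polynomial in `y`
  have c1 : PolyF 2 (fun q => d1 * (x.1^2 - x.2^2) * (q.1^2 - q.2^2)) := by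
    have h := (PolyF.const (d1 * (x.1^2 - x.2^2)) 0).mul
      ((PolyF.fst.pow 2).add ((PolyF.const (-1) 0).mul (PolyF.snd.pow 2)))
    simpa [sub_eq_add_neg] using h
  have c2 : PolyF 1 (fun q => d2 * (x.1 + x.2) * (q.1 + q.2)) :=
    (PolyF.const (d2 * (x.1 + x.2)) 0).mul (PolyF.fst.add PolyF.snd)
  have c3 : PolyF 1 (fun q => d3 * (x.1 - x.2) * (q.1 - q.2)) := by
    have h := (PolyF.const (d3 * (x.1 - x.2)) 0).mul
      (PolyF.fst.add ((PolyF.const (-1) 0).mul PolyF.snd))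
    simpa [sub_eq_add_neg] using h
  obtain ⟨R, hR, eR⟩ := (((polyF_of_DB b0 (PolyF.const 1 0)).add (polyF_of_DB b1 c1)).add
    (polyF_of_DB b2 c2)).add (polyF_of_DB b3 c3)
  simp only [one_mul] at eR
  -- reproduction by `R`
  have hrep : ∀ S : MvPolynomial (Fin 2) ℝ, S.totalDegree ≤ n →
      ∫ z in sqDom, evalP R z * evalP S z * CW z = evalP S x := by
    intro S hS
    obtain ⟨p0, p1, p2, p3, h0, h1, h2, h3, eS⟩ := dec_poly S hS
    have key := integral_prod W0 (fun t => evalP Q0 t)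
      (fun t => d1 * (x.1^2 - x.2^2) * evalP Q1 t)
      (fun t => d2 * (x.1 + x.2) * evalP Q2 t) (fun t => d3 * (x.1 - x.2) * evalP Q3 t)
      (evalP p0) (evalP p1) (evalP p2) (evalP p3)
    have fe : (fun z : ℝ × ℝ =>
      (evalP Q0 (phiM z) + (z.1^2 - z.2^2) * (d1 * (x.1^2 - x.2^2) * evalP Q1 (phiM z))
        + (z.1 + z.2) * (d2 * (x.1 + x.2) * evalP Q2 (phiM z))
        + (z.1 - z.2) * (d3 * (x.1 - x.2) * evalP Q3 (phiM z))) *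
      (evalP p0 (phiM z) + (z.1^2 - z.2^2) * evalP p1 (phiM z) + (z.1 + z.2) * evalP p2 (phiM z)
        + (z.1 - z.2) * evalP p3 (phiM z)) * (W0 (phiM z) * |z.1^2 - z.2^2|))
        = fun z => evalP R z * evalP S z * CW z := by
      ext z
      rw [← eR, eS, hCW]
      ring
    rw [fe] at key
    rw [key (int_poly_sq iC ((evalP_cont R).mul (evalP_cont S)))]
    have j0 : IntegrableOn (fun t => evalP Q0 t * evalP p0 t * W0 t) omegaDom :=
      int_poly_omega iW ((evalP_cont _).mul (evalP_cont _))
    have j1 : IntegrableOn (fun t => evalP Q1 t * evalP p1 t * W1 t) omegaDom := by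
      have h : IntegrableOn (fun t => (evalP Q1 t * evalP p1 t *
          (d1 * ((1 + t.1 + t.2) * (1 - t.1 + t.2)))) * W0 t) omegaDom :=
        int_poly_omega iW (((evalP_cont _).mul (evalP_cont _)).mul (by fun_prop))
      refine h.congr_fun (fun t ht => ?_) measurable_omega
      simp only [hW1 t ht]; ring
    have j2 : IntegrableOn (fun t => evalP Q2 t * evalP p2 t * W2 t) omegaDom := by
      have h : IntegrableOn (fun t => (evalP Q2 t * evalP p2 t *
          (d2 * (1 + t.1 + t.2))) * W0 t) omegaDom :=
        int_poly_omega iW (((evalP_cont _).mul (evalP_cont _)).mul (by fun_prop))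
      refine h.congr_fun (fun t ht => ?_) measurable_omega
      simp only [hW2 t ht]; ring
    have j3 : IntegrableOn (fun t => evalP Q3 t * evalP p3 t * W3 t) omegaDom := by
      have h : IntegrableOn (fun t => (evalP Q3 t * evalP p3 t *
          (d3 * (1 - t.1 + t.2))) * W0 t) omegaDom :=
        int_poly_omega iW (((evalP_cont _).mul (evalP_cont _)).mul (by fun_prop))
      refine h.congr_fun (fun t ht => ?_) measurable_omega
      simp only [hW3 t ht]; ring
    have i1 := j1.const_mul (x.1^2 - x.2^2)
    have i2 := j2.const_mul (x.1 + x.2)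
    have i3 := j3.const_mul (x.1 - x.2)
    have s1 : IntegrableOn (fun t => evalP Q0 t * evalP p0 t * W0 t +
      (x.1^2 - x.2^2) * (evalP Q1 t * evalP p1 t * W1 t)) omegaDom := j0.add i1
    have s2 : IntegrableOn (fun t => evalP Q0 t * evalP p0 t * W0 t +
      (x.1^2 - x.2^2) * (evalP Q1 t * evalP p1 t * W1 t) +
      (x.1 + x.2) * (evalP Q2 t * evalP p2 t * W2 t)) omegaDom := s1.add i2
    have ee : ∫ t in omegaDom, (evalP Q0 t * evalP p0 t
        + (1 + t.1 + t.2) * (1 - t.1 + t.2) * (d1 * (x.1^2 - x.2^2) * evalP Q1 t * evalP p1 t)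
        + (1 + t.1 + t.2) * (d2 * (x.1 + x.2) * evalP Q2 t * evalP p2 t)
        + (1 - t.1 + t.2) * (d3 * (x.1 - x.2) * evalP Q3 t * evalP p3 t)) * W0 t =
        ∫ t in omegaDom, (evalP Q0 t * evalP p0 t * W0 t +
          (x.1^2 - x.2^2) * (evalP Q1 t * evalP p1 t * W1 t) +
          (x.1 + x.2) * (evalP Q2 t * evalP p2 t * W2 t) +
          (x.1 - x.2) * (evalP Q3 t * evalP p3 t * W3 t)) := by
      apply setIntegral_congr_fun measurable_omega
      intro t ht
      simp only [hW1 t ht, hW2 t ht, hW3 t ht]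
      ring
    rw [ee, integral_add s2 i3, integral_add s1 i2, integral_add j0 i1, integral_const_mul,
      integral_const_mul, integral_const_mul, r0 p0 h0, r1 p1 h1, r2 p2 h2, r3 p3 h3, eS]
  -- the difference vanishes
  set D := P - R with hD
  have hDd : D.totalDegree ≤ n := (MvPolynomial.totalDegree_sub _ _).trans (max_le hP hR)
  have hzero : ∫ z in sqDom, evalP D z * evalP D z * CW z = 0 := by
    have a1 := hc D hDd x hx
    simp only [eP] at a1
    have a2 := hrep D hDd
    have q1 : IntegrableOn (fun z => evalP P z * evalP D z * CW z) sqDom :=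
      int_poly_sq iC ((evalP_cont P).mul (evalP_cont D))
    have q2 : IntegrableOn (fun z => evalP R z * evalP D z * CW z) sqDom :=
      int_poly_sq iC ((evalP_cont R).mul (evalP_cont D))
    have : ∫ z in sqDom, evalP D z * evalP D z * CW z =
        ∫ z in sqDom, (evalP P z * evalP D z * CW z - evalP R z * evalP D z * CW z) := by
      congr 1
      ext z
      rw [hD, evalP_sub]; ring
    rw [this, integral_sub q1 q2, a1, a2, sub_self]
  have hnn : 0 ≤ᵐ[volume.restrict sqDom] fun z => evalP D z * evalP D z * CW z := by
    rw [EventuallyLE, ae_restrict_iff' isCompact_sq.measurableSet]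
    exact Eventually.of_forall fun z hz => mul_nonneg (mul_self_nonneg _) (hpos z hz)
  have hae := (integral_eq_zero_iff_of_nonneg_ae hnn
    (int_poly_sq iC ((evalP_cont D).mul (evalP_cont D)))).1 hzero
  have hDy : evalP D y = 0 := by
    rw [← hc D hDd y hy]
    apply integral_eq_zero_of_ae
    filter_upwards [hae] with z hz
    simp only [Pi.zero_apply, mul_eq_zero, or_self] at hz ⊢
    tauto
  rw [hD, evalP_sub, sub_eq_zero, ← eP, ← eR] at hDy
  rw [hDy, e0, e1, e2, e3]

lemma rk_cont {D : Set (ℝ × ℝ)} {W : ℝ × ℝ → ℝ} {n : ℕ} {K : ℝ × ℝ → ℝ × ℝ → ℝ}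
    (hK : IsRK D W n K) (t : ℝ × ℝ) : Continuous (fun s => K s t) := by
  obtain ⟨⟨KP, h⟩, -⟩ := hK
  simp only [h]
  have h' : Continuous (fun q : ℝ × ℝ => (![q.1, q.2, t.1, t.2] : Fin 4 → ℝ)) := by
    refine continuous_pi fun i => ?_
    fin_cases i
    · exact continuous_fst
    · exact continuous_snd
    · exact continuous_const
    · exact continuous_const
  exact (MvPolynomial.continuous_eval KP).comp h'

/-- Extension by continuity from the good points of the square. -/
lemma extend_sq (F : ℝ × ℝ → ℝ) (hF : Continuous F)
    (h : ∀ x ∈ sqDom, phiM x ∈ omegaDom → F x = 0) (x : ℝ × ℝ) (hx : x ∈ sqDom) : F x = 0 := by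
  obtain ⟨⟨a1, a2⟩, ⟨a3, a4⟩⟩ := hx
  set c : ℝ → ℝ × ℝ := fun ε => ((1 - 2*ε) * x.1, (1 - 2*ε) * x.2 + ε) with hcdef
  have hcc : Continuous c := by fun_prop
  have hc0 : c 0 = x := by simp [hcdef]
  have ht : Tendsto (fun ε => F (c ε)) (nhdsWithin 0 (Ioi 0)) (nhds (F x)) := by
    have := (hF.comp hcc).tendsto 0
    simp only [Function.comp_apply, hc0] at this
    exact this.mono_left nhdsWithin_le_nhds
  have hpos : ∀ᶠ ε : ℝ in nhdsWithin 0 (Ioi 0), 0 < ε := self_mem_nhdsWithin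
  have hlt : ∀ᶠ ε : ℝ in nhdsWithin 0 (Ioi 0), ε < 1/2 :=
    nhdsWithin_le_nhds (Iio_mem_nhds (by norm_num))
  have hne : ∀ S T : ℝ, T ≠ 0 → ∀ᶠ ε : ℝ in nhdsWithin 0 (Ioi 0), (1 - 2*ε) * S + ε * T ≠ 0 := by
    intro S T hT
    by_cases hS : S = 0
    · filter_upwards [hpos] with ε he
      simp [hS, he.ne', hT]
    · have hcon : Continuous (fun ε : ℝ => (1 - 2*ε) * S + ε * T) := by fun_prop
      have := hcon.continuousAt.eventually_ne (x := (0:ℝ)) (y := 0) (by simpa using hS)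
      exact nhdsWithin_le_nhds this
  have hev : ∀ᶠ ε : ℝ in nhdsWithin 0 (Ioi 0), F (c ε) = 0 := by
    filter_upwards [hpos, hlt, hne (x.1 + x.2) 1 one_ne_zero,
      hne (x.1 - x.2) (-1) (by norm_num)] with ε e1 e2 e3 e4
    have b1 : -1 < (c ε).1 := by simp only [hcdef]; nlinarith
    have b2 : (c ε).1 < 1 := by simp only [hcdef]; nlinarith
    have b3 : -1 < (c ε).2 := by simp only [hcdef]; nlinarith
    have b4 : (c ε).2 < 1 := by simp only [hcdef]; nlinarith
    apply h
    · exact ⟨⟨b1.le, b2.le⟩, ⟨b3.le, b4.le⟩⟩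
    · apply phiM_mem
      · nlinarith
      · nlinarith
      · intro h0
        apply e3
        rw [← h0]; simp only [hcdef]; ring
      · intro h0
        apply e4
        rw [← h0]; simp only [hcdef]; ring
  have : Tendsto (fun ε => F (c ε)) (nhdsWithin 0 (Ioi 0)) (nhds 0) :=
    tendsto_const_nhds.congr' (hev.mono fun _ h => h.symm)
  exact tendsto_nhds_unique ht this

lemma root_prods (t : ℝ × ℝ) (ht : t ∈ omegaDom) :
    (1 - xRoot t) * (1 - yRoot t) = 1 - t.1 + t.2 ∧
    (1 + xRoot t) * (1 + yRoot t) = 1 + t.1 + t.2 := by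
  have hd : 0 ≤ t.1^2 - 4*t.2 := by
    obtain ⟨x, y, -, -, -, rfl⟩ := ht
    simp only
    nlinarith [sq_nonneg (x - y)]
  have h := Real.sq_sqrt hd
  unfold xRoot yRoot
  constructor <;> nlinarith

/-- decomposition of the reproducing kernel of `Π_n²` in `L²(𝒲_γ)`
on the square into reproducing kernels on `Ω`. -/
theorem stmt_10
    (w : ℝ → ℝ) (hw0 : ∀ x, 0 ≤ w x)
    (hwi : IntegrableOn w (Icc (-1:ℝ) 1))
    (hw1 : (∫ x in Icc (-1:ℝ) 1, w x) = 1)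
    (hwm : ∀ k : ℕ, IntegrableOn (fun x => x ^ k * w x) (Icc (-1:ℝ) 1))
    (γ : ℝ) (hγ : -1 < γ)
    (a00 a11 a10 a01 : ℝ)
    (ha00p : 0 < a00) (ha11p : 0 < a11) (ha10p : 0 < a10) (ha01p : 0 < a01)
    (ha00 : (∫ q in sqDom, a00 * w q.1 * w q.2 * |q.1 - q.2| ^ (2*γ+1)) = 1)
    (ha11 : (∫ q in sqDom, a11 * ((1 - q.1) * (1 + q.1) * w q.1)
        * ((1 - q.2) * (1 + q.2) * w q.2) * |q.1 - q.2| ^ (2*γ+1)) = 1)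
    (ha10 : (∫ q in sqDom, a10 * ((1 - q.1) * w q.1)
        * ((1 - q.2) * w q.2) * |q.1 - q.2| ^ (2*γ+1)) = 1)
    (ha01 : (∫ q in sqDom, a01 * ((1 + q.1) * w q.1)
        * ((1 + q.2) * w q.2) * |q.1 - q.2| ^ (2*γ+1)) = 1)
    (W00 W11 W10 W01 : ℝ × ℝ → ℝ)
    (hW00 : ∀ q : ℝ × ℝ, W00 q
      = 2 * a00 * w (xRoot q) * w (yRoot q) * (q.1^2 - 4*q.2) ^ γ)
    (hW11 : ∀ q : ℝ × ℝ, W11 q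
      = 2 * a11 * ((1 - xRoot q) * (1 + xRoot q) * w (xRoot q))
        * ((1 - yRoot q) * (1 + yRoot q) * w (yRoot q)) * (q.1^2 - 4*q.2) ^ γ)
    (hW10 : ∀ q : ℝ × ℝ, W10 q
      = 2 * a10 * ((1 - xRoot q) * w (xRoot q))
        * ((1 - yRoot q) * w (yRoot q)) * (q.1^2 - 4*q.2) ^ γ)
    (hW01 : ∀ q : ℝ × ℝ, W01 q
      = 2 * a01 * ((1 + xRoot q) * w (xRoot q))
        * ((1 + yRoot q) * w (yRoot q)) * (q.1^2 - 4*q.2) ^ γ)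
    (CW : ℝ × ℝ → ℝ)
    (hCW : ∀ q : ℝ × ℝ, CW q = W00 (2*q.1*q.2, q.1^2 + q.2^2 - 1) * |q.1^2 - q.2^2|)
    (K00 K11 K10 K01 : ℕ → (ℝ × ℝ) → (ℝ × ℝ) → ℝ)
    (hK00 : ∀ n, IsRK omegaDom W00 n (K00 n))
    (hK11 : ∀ n, IsRK omegaDom W11 n (K11 n))
    (hK10 : ∀ n, IsRK omegaDom W10 n (K10 n))
    (hK01 : ∀ n, IsRK omegaDom W01 n (K01 n))
    (KC : ℕ → (ℝ × ℝ) → (ℝ × ℝ) → ℝ)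
    (hKC : ∀ n, IsRK sqDom CW n (KC n)) :
    ∀ n : ℕ, ∀ x y : ℝ × ℝ, x ∈ sqDom → y ∈ sqDom →
      KC n x y
        = K00 (n / 2) (2*x.1*x.2, x.1^2 + x.2^2 - 1) (2*y.1*y.2, y.1^2 + y.2^2 - 1)
          + (if 2 ≤ n then
              (a11 / a00) * (x.1^2 - x.2^2) * (y.1^2 - y.2^2)
                * K11 (n / 2 - 1) (2*x.1*x.2, x.1^2 + x.2^2 - 1) (2*y.1*y.2, y.1^2 + y.2^2 - 1)
            else 0)
          + (if 1 ≤ n then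
              (a01 / a00) * (x.1 + x.2) * (y.1 + y.2)
                * K01 ((n-1) / 2) (2*x.1*x.2, x.1^2 + x.2^2 - 1) (2*y.1*y.2, y.1^2 + y.2^2 - 1)
            else 0)
          + (if 1 ≤ n then
              (a10 / a00) * (x.1 - x.2) * (y.1 - y.2)
                * K10 ((n-1) / 2) (2*x.1*x.2, x.1^2 + x.2^2 - 1) (2*y.1*y.2, y.1^2 + y.2^2 - 1)
            else 0) := by
  have hpos : ∀ q ∈ sqDom, 0 ≤ CW q := by
    rintro ⟨a, b⟩ ⟨⟨h1, h2⟩, ⟨h3, h4⟩⟩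
    simp only at h1 h2 h3 h4
    rw [hCW, hW00]
    have h5 : 0 ≤ (2*a*b)^2 - 4*(a^2 + b^2 - 1) := by
      have : (2*a*b)^2 - 4*(a^2 + b^2 - 1) = 4 * ((1 - a^2) * (1 - b^2)) := by ring
      rw [this]
      have : 0 ≤ (1 - a^2) * (1 - b^2) := mul_nonneg (by nlinarith) (by nlinarith)
      linarith
    exact mul_nonneg (mul_nonneg (mul_nonneg (mul_nonneg (by linarith) (hw0 _)) (hw0 _))
      (Real.rpow_nonneg h5 _)) (abs_nonneg _)
  have iC : IntegrableOn CW sqDom := rk_integrable (hKC 0) (0, 0)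
    ⟨⟨by norm_num, by norm_num⟩, ⟨by norm_num, by norm_num⟩⟩
  have iW : IntegrableOn W00 omegaDom := rk_integrable (hK00 0) (0 + 1/2, 0 * (1/2))
    ⟨0, 1/2, by norm_num, by norm_num, by norm_num, rfl⟩
  have w1 : ∀ t ∈ omegaDom, W11 t = (a11/a00) * ((1 + t.1 + t.2) * (1 - t.1 + t.2)) * W00 t := by
    intro t ht
    obtain ⟨r1, r2⟩ := root_prods t ht
    rw [hW11, hW00, ← r1, ← r2]
    field_simp
  have w2 : ∀ t ∈ omegaDom, W01 t = (a01/a00) * (1 + t.1 + t.2) * W00 t := by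
    intro t ht
    obtain ⟨r1, r2⟩ := root_prods t ht
    rw [hW01, hW00, ← r2]
    field_simp
  have w3 : ∀ t ∈ omegaDom, W10 t = (a10/a00) * (1 - t.1 + t.2) * W00 t := by
    intro t ht
    obtain ⟨r1, r2⟩ := root_prods t ht
    rw [hW10, hW00, ← r1]
    field_simp
  intro n x y hx hy
  have g0 : GK 0 n W00 (K00 (n/2)) :=
    gk_of_rk (hK00 (n/2)) (fun _ => rfl) (fun h => absurd (Nat.zero_le n) h) (fun _ => by simp)
  have g1 : GK 2 n W11 (if 2 ≤ n then K11 (n/2-1) else fun _ _ => 0) :=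
    gk_of_rk (hK11 (n/2-1)) (fun h => if_pos h) (fun h => if_neg h) (fun _ => by omega)
  have g2 : GK 1 n W01 (if 1 ≤ n then K01 ((n-1)/2) else fun _ _ => 0) :=
    gk_of_rk (hK01 ((n-1)/2)) (fun h => if_pos h) (fun h => if_neg h) (fun _ => by omega)
  have g3 : GK 1 n W10 (if 1 ≤ n then K10 ((n-1)/2) else fun _ _ => 0) :=
    gk_of_rk (hK10 ((n-1)/2)) (fun h => if_pos h) (fun h => if_neg h) (fun _ => by omega)
  have good := main_good w1 w2 w3 g0 g1 g2 g3 (hKC n) hCW hpos iC iW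
  have m0 := (rk_cont (hK00 (n/2)) (phiM y)).comp continuous_phiM
  have m1 := (rk_cont (hK11 (n/2-1)) (phiM y)).comp continuous_phiM
  have m2 := (rk_cont (hK01 ((n-1)/2)) (phiM y)).comp continuous_phiM
  have m3 := (rk_cont (hK10 ((n-1)/2)) (phiM y)).comp continuous_phiM
  have m4 := rk_cont (hKC n) y
  simp only [Function.comp_def] at m0 m1 m2 m3
  have hfin := extend_sq (fun x => KC n x y - (K00 (n / 2) (phiM x) (phiM y)
          + (if 2 ≤ n then
              (a11 / a00) * (x.1^2 - x.2^2) * (y.1^2 - y.2^2)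
                * K11 (n / 2 - 1) (phiM x) (phiM y)
            else 0)
          + (if 1 ≤ n then
              (a01 / a00) * (x.1 + x.2) * (y.1 + y.2)
                * K01 ((n-1) / 2) (phiM x) (phiM y)
            else 0)
          + (if 1 ≤ n then
              (a10 / a00) * (x.1 - x.2) * (y.1 - y.2)
                * K10 ((n-1) / 2) (phiM x) (phiM y)
            else 0))) ?_ ?_ x hx
  · exact sub_eq_zero.1 hfin
  · refine m4.sub (((m0.add ?_).add ?_).add ?_)
    · split_ifs
      · exact Continuous.mul (by fun_prop) m1
      · exact continuous_const
    · split_ifs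
      · exact Continuous.mul (by fun_prop) m2
      · exact continuous_const
    · split_ifs
      · exact Continuous.mul (by fun_prop) m3
      · exact continuous_const
  · intro z hz hzs
    rw [good z y hz hy hzs]
    split_ifs <;> ring
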